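/- Define square integer matrices C_m as follows: C_0 = (1) and C_1 = (2) (both 1×1); for n ≥ 1, C_{2n} is the block diagonal matrix diag(C_{2n−1}, C_{2n−3}, …, C_3, C_1, C_0); and for n ≥ 1, C_{2n+1} = [[2·C_{2n−1}, C_{2n−1}], [C_{2n−1}, 2·C_{2n−2}]] in block form. Then for every n ≥ 0 the matrix C_{2n+1} is symmetric, and every entry of C_{2n+1} is either zero or a power of 2. -/

import Mathlib

/-- Identification of `Fin 2^n ⊕ Fin 2^n` with `Fin 2^(n+1)` giving block decompositions. -/
def pow2Equiv (n : ℕ) : Fin (2 ^ n) ⊕ Fin (2 ^ n) ≃ Fin (2 ^ (n + 1)) :=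
  finSumFinEquiv.trans (finCongr (by rw [pow_succ, mul_two]))

/-- `CC n = (C_{2n}, C_{2n+1})`, where `C_0 = (1)`, `C_1 = (2)`,
`C_{2n} = diag(C_{2n−1}, C_{2n−3}, …, C_1, C_0) = diag(C_{2n−1}, C_{2n−2})` and
`C_{2n+1} = [[2·C_{2n−1}, C_{2n−1}],[C_{2n−1}, 2·C_{2n−2}]]` (both of size `2^n`). -/
def CC : (n : ℕ) → Matrix (Fin (2 ^ n)) (Fin (2 ^ n)) ℤ × Matrix (Fin (2 ^ n)) (Fin (2 ^ n)) ℤ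
  | 0 => (1, 2)
  | n + 1 =>
      (Matrix.reindex (pow2Equiv n) (pow2Equiv n)
        (Matrix.fromBlocks (CC n).2 0 0 (CC n).1),
       Matrix.reindex (pow2Equiv n) (pow2Equiv n)
        (Matrix.fromBlocks (2 • (CC n).2) (CC n).2 (CC n).2 (2 • (CC n).1)))

/-- Zero or a power of two. -/
def IsZeroOrTwoPow (a : ℤ) : Prop := a = 0 ∨ ∃ e : ℕ, a = 2 ^ e

theorem IsZeroOrTwoPow.two_mul {a : ℤ} (h : IsZeroOrTwoPow a) : IsZeroOrTwoPow (2 * a) := by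
  rcases h with rfl | ⟨e, rfl⟩
  · exact Or.inl (mul_zero 2)
  · exact Or.inr ⟨e + 1, (pow_succ' 2 e).symm⟩

theorem CC_isSymm (n : ℕ) : (CC n).1.IsSymm ∧ (CC n).2.IsSymm := by
  induction n with
  | zero => exact ⟨Matrix.isSymm_one, by ext i j; fin_cases i; fin_cases j; rfl⟩
  | succ n ih =>
    obtain ⟨h₁, h₂⟩ := ih
    exact ⟨(Matrix.IsSymm.fromBlocks h₂ Matrix.transpose_zero h₁).submatrix _,
      (Matrix.IsSymm.fromBlocks (h₂.smul 2) h₂ (h₁.smul 2)).submatrix _⟩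

theorem CC_entries (n : ℕ) :
    (∀ i j, IsZeroOrTwoPow ((CC n).1 i j)) ∧ ∀ i j, IsZeroOrTwoPow ((CC n).2 i j) := by
  induction n with
  | zero =>
    refine ⟨fun i j => Or.inr ⟨0, ?_⟩, fun i j => Or.inr ⟨1, ?_⟩⟩ <;>
      (fin_cases i; fin_cases j; rfl)
  | succ n ih =>
    obtain ⟨h₁, h₂⟩ := ih
    constructor <;> intro i j <;>
      obtain ⟨i, rfl⟩ := (pow2Equiv n).surjective i <;>
      obtain ⟨j, rfl⟩ := (pow2Equiv n).surjective j <;>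
      simp only [CC, Matrix.reindex_apply, Matrix.submatrix_apply, Equiv.symm_apply_apply]
    · rcases i with i | i <;> rcases j with j | j
      exacts [h₂ i j, Or.inl rfl, Or.inl rfl, h₁ i j]
    · rcases i with i | i <;> rcases j with j | j
      · rw [Matrix.fromBlocks_apply₁₁, Matrix.smul_apply, nsmul_eq_mul]
        exact (h₂ i j).two_mul
      · exact h₂ i j
      · exact h₂ i j
      · rw [Matrix.fromBlocks_apply₂₂, Matrix.smul_apply, nsmul_eq_mul]
        exact (h₁ i j).two_mul

/-- each Cartan matrix `C_{2n+1}` is symmetric, and all of its entries are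
zero or powers of `2`. -/
theorem stmt_13 (n : ℕ) :
    ((CC n).2).IsSymm ∧
    ∀ i j : Fin (2 ^ n), (CC n).2 i j = 0 ∨ ∃ e : ℕ, (CC n).2 i j = 2 ^ e := by
  exact ⟨(CC_isSymm n).2, (CC_entries n).2⟩
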